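/- Let p, q ∈ V with p·p ≠ 0, let D := (p·p)(q·q) − (p·q)² and assume D > 0, let τ := ((p·q) + i·√D)/(p·p) ∈ ℂ and Ω := q − conj(τ)·p ∈ V ⊗ ℂ. Then Ω·conj(Ω) = 2D/(p·p); in particular, if p·p > 0 then Ω·conj(Ω) > 0, so the real span of Re Ω and Im Ω is a positive two-plane. -/

import Mathlib

/- STATEMENT 1: For the attractor period Ω = q − conj(τ)·p one has
Ω·conj(Ω) = 2D/(p·p); in particular if p·p > 0 then Ω·conj(Ω) > 0, so the
real span of Re Ω and Im Ω is a positive two-plane.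
We model the complexification V ⊗ ℂ as pairs (re, im) ∈ V × V. -/

noncomputable section

variable {V : Type*}

/-- Inclusion of `V` into its complexification `V × V`. -/
def toC [AddCommGroup V] [Module ℝ V] (v : V) : V × V := (v, 0)

/-- Coordinatewise complex conjugation on the complexification. -/
def conjC [AddCommGroup V] [Module ℝ V] (z : V × V) : V × V := (z.1, -z.2)

/-- Scalar multiplication by a complex number on the complexification. -/
def csmul [AddCommGroup V] [Module ℝ V] (c : ℂ) (z : V × V) : V × V :=
  (c.re • z.1 - c.im • z.2, c.re • z.2 + c.im • z.1)

/-- The ℂ-bilinear extension of a real bilinear form to the complexification. -/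
def Bc [AddCommGroup V] [Module ℝ V] (b : LinearMap.BilinForm ℝ V) (z w : V × V) : ℂ :=
  ⟨b z.1 w.1 - b z.2 w.2, b z.1 w.2 + b z.2 w.1⟩

/-! For every `τ`, `Ω·conj(Ω) = q² - 2 Re(τ) (p·q) + |τ|² p²`. The attractor value of `τ` is a root
of `p² z² - 2 (p·q) z + q²` whose conjugate is the other root, so Vieta's formulas give
`Re τ = (p·q)/p²` and `|τ|² = q²/p²`; substituting, `Ω·conj(Ω) = 2 (q² - (p·q)²/p²)`. -/

section AttractorModulus

variable {a m c : ℝ}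

/-- The root of `a z² - 2 m z + c` that lies in the upper half-plane when `a > 0` and `a c > m²`.
The attractor value of `τ` for the charge `p dx + q dy` is the case `a = p²`, `m = p·q`, `c = q²`.
For `a c < m²` the square root is `0` and the value is no longer a root. -/
def attractorModulus (a m c : ℝ) : ℂ :=
  ((m : ℂ) + Complex.I * (Real.sqrt (a * c - m * m) : ℂ)) / (a : ℂ)

lemma attractorModulus_re : (attractorModulus a m c).re = m / a := by
  simp [attractorModulus, Complex.div_ofReal_re]

lemma attractorModulus_im : (attractorModulus a m c).im = Real.sqrt (a * c - m * m) / a := by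
  simp [attractorModulus, Complex.div_ofReal_im]

lemma normSq_attractorModulus (ha : a ≠ 0) (hD : 0 ≤ a * c - m * m) :
    Complex.normSq (attractorModulus a m c) = c / a := by
  rw [Complex.normSq_apply, attractorModulus_re, attractorModulus_im, div_mul_div_comm,
    div_mul_div_comm, Real.mul_self_sqrt hD]
  field_simp
  ring

end AttractorModulus

section PeriodPoint

variable [AddCommGroup V] [Module ℝ V] {b : LinearMap.BilinForm ℝ V}

/-- The period `Ω = q - conj(τ) p` attached to the charge `p dx + q dy` and an arbitrary
parameter `τ`. -/
def periodPoint (p q : V) (τ : ℂ) : V × V :=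
  toC q - csmul (starRingEnd ℂ τ) (toC p)

lemma periodPoint_eq_re_im (p q : V) (τ : ℂ) :
    periodPoint p q τ = (q - τ.re • p, τ.im • p) := by
  simp [periodPoint, toC, csmul]

lemma Bc_conjC_self (hb : b.IsSymm) (z : V × V) :
    Bc b z (conjC z) = ((b z.1 z.1 + b z.2 z.2 : ℝ) : ℂ) := by
  apply Complex.ext
  · simp [Bc, conjC]
  · simp [Bc, conjC, hb.eq z.2 z.1]

lemma Bc_periodPoint_conjC (hb : b.IsSymm) (p q : V) (τ : ℂ) :
    Bc b (periodPoint p q τ) (conjC (periodPoint p q τ)) =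
      ((b q q - 2 * τ.re * b p q + Complex.normSq τ * b p p : ℝ) : ℂ) := by
  rw [Bc_conjC_self hb, periodPoint_eq_re_im, Complex.normSq_apply]
  simp only [map_sub, map_smul, LinearMap.sub_apply, LinearMap.smul_apply, smul_eq_mul, hb.eq q p]
  congr 1
  ring

lemma Bc_periodPoint_attractorModulus (hb : b.IsSymm) {p q : V} (hp : b p p ≠ 0)
    (hD : 0 ≤ b p p * b q q - b p q * b p q) :
    Bc b (periodPoint p q (attractorModulus (b p p) (b p q) (b q q)))
        (conjC (periodPoint p q (attractorModulus (b p p) (b p q) (b q q)))) =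
      ((2 * (b p p * b q q - b p q * b p q) / b p p : ℝ) : ℂ) := by
  rw [Bc_periodPoint_conjC hb, attractorModulus_re, normSq_attractorModulus hp hD]
  congr 1
  field_simp
  ring

end PeriodPoint

theorem attractor_period_positive
    [AddCommGroup V] [Module ℝ V]
    (b : LinearMap.BilinForm ℝ V) (hsymm : ∀ x y : V, b x y = b y x)
    (p q : V) (hpp : b p p ≠ 0)
    (D : ℝ) (hD : D = b p p * b q q - b p q * b p q) (hDpos : 0 < D)
    (τ : ℂ) (hτ : τ = ((b p q : ℂ) + Complex.I * (Real.sqrt D : ℂ)) / ((b p p : ℝ) : ℂ))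
    (Ω : V × V) (hΩ : Ω = toC q - csmul (starRingEnd ℂ τ) (toC p)) :
    Bc b Ω (conjC Ω) = ((2 * D / b p p : ℝ) : ℂ) ∧
    (0 < b p p → 0 < 2 * D / b p p) := by
  subst hD
  have hτ_attractor : τ = attractorModulus (b p p) (b p q) (b q q) := hτ
  have hΩ_period : Ω = periodPoint p q τ := hΩ
  constructor
  · rw [hΩ_period, hτ_attractor]
    exact Bc_periodPoint_attractorModulus ⟨hsymm⟩ hpp hDpos.le
  · exact div_pos (mul_pos two_pos hDpos)

end
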